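/- arXiv:2002.11292 — 2 statements merged into one kernel-verified Lean document; each statement's English description precedes it below -/
import Mathlib

section
/- With the notation of the context, C^{BR_U}_*(X;ℤ)_X = (C^{BR_U}_n(X;ℤ)_X, ∂^{BR_U}_n)_{n∈ℤ} is a chain complex; that is, ∂^{BR_U}_{n−1} ∘ ∂^{BR_U}_n = 0 for every integer n. -/
open FreeAbelianGroup
open scoped TensorProduct

namespace GAlex

variable {G M A : Type*} [Group G] [AddCommGroup M] [DistribMulAction Gᵐᵒᵖ M] [AddCommGroup A]

/-- The right action `m · g` of a group element `g : G` on `m : M`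
(coming from the right `ℤ[G]`-module structure on `M`). -/
def ract (m : M) (g : G) : M := MulOpposite.op g • m

variable (φ : G →* G)

/-- The operation `(m,g) ⊳ (n,h) = (mh + n(φ(h) − h), h⁻¹gh)` of the `G`-Alexander biquandle. -/
def under (x y : M × G) : M × G :=
  (ract x.1 y.2 + ract y.1 (φ y.2) - ract y.1 y.2, y.2⁻¹ * x.2 * y.2)

/-- The operation `(m,g) ⊚ (n,h) = (mφ(h), g)` of the `G`-Alexander biquandle. -/
def _root_.GAlex.over (x y : M × G) : M × G := (ract x.1 (φ y.2), x.2)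

/-- The face `g_{⟨p⟩}` (delete the `p`-th entry). -/
def dGdel (n : ℕ) (p : Fin (n + 1)) (g : Fin (n + 1) → G) : Fin n → G :=
  fun j => g (p.succAbove j)

/-- The face `g_{⟨⊲p⟩}` (conjugate the first entries by `g p` and delete the `p`-th entry). -/
def dGconj (n : ℕ) (p : Fin (n + 1)) (g : Fin (n + 1) → G) : Fin n → G :=
  fun j => if (j : ℕ) < (p : ℕ) then (g p)⁻¹ * g j.castSucc * g p else g j.succ

/-- The face `m_{⟨p⟩}` (merge the two entries adjacent to position `p`;
for `p = 0` drop the first entry). -/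
def dMmer (n : ℕ) (p : Fin (n + 1)) (m : Fin (n + 1) → M) : Fin n → M :=
  fun j =>
    if (j : ℕ) + 1 < (p : ℕ) then m j.castSucc
    else if (j : ℕ) + 1 = (p : ℕ) then m j.castSucc + m j.succ
    else m j.succ

/-- The face `m_{⟨⊲p⟩}`. -/
def dMconj (n : ℕ) (p : Fin (n + 1)) (g : Fin (n + 1) → G) (m : Fin (n + 1) → M) : Fin n → M :=
  fun j =>
    if (j : ℕ) + 1 < (p : ℕ) then ract (m j.castSucc) (g p)
    else if (j : ℕ) + 1 = (p : ℕ) then ract (m j.castSucc) (g p) + ract (m j.succ) (φ (g p))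
    else ract (m j.succ) (φ (g p))

/-- The boundary map `∂^{BR_U}_{n+1} : C^{BR_U}_{n+1}(X;ℤ) → C^{BR_U}_n(X;ℤ)`
(the boundary `∂^{BR_U}_k` is `0` for `k ≤ 1`, which agrees with this formula at `n = 0`). -/
def dBRU (n : ℕ) :
    FreeAbelianGroup ((Fin (n + 1) → G) × (Fin (n + 1) → M)) →+
      FreeAbelianGroup ((Fin n → G) × (Fin n → M)) :=
  FreeAbelianGroup.lift fun x =>
    ∑ p : Fin (n + 1),
      (-1 : ℤ) ^ (p : ℕ) •
        (FreeAbelianGroup.of (dGdel n p x.1, dMmer n p x.2) -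
          FreeAbelianGroup.of (dGconj n p x.1, dMconj φ n p x.1 x.2))

/-- The birack boundary map `∂^{BR}_{n+1} : C^{BR}_{n+1}(X;ℤ) → C^{BR}_n(X;ℤ)`
for the `G`-Alexander biquandle `X = M × G` (with trivial `X`-set). -/
def dBR (n : ℕ) :
    FreeAbelianGroup (Fin (n + 1) → M × G) →+ FreeAbelianGroup (Fin n → M × G) :=
  FreeAbelianGroup.lift fun x =>
    ∑ p : Fin (n + 1),
      (-1 : ℤ) ^ (p : ℕ) •
        (FreeAbelianGroup.of (fun j => x (p.succAbove j)) -
          FreeAbelianGroup.of (fun j : Fin n =>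
            if (j : ℕ) < (p : ℕ) then under φ (x j.castSucc) (x p)
            else GAlex.over φ (x j.succ) (x p)))

/-- `γ_n((m₁,g₁),…,(m_n,g_n)) = (g₁,…,g_n; m₁−m₂, …, m_{n−1}−m_n, m_n)`. -/
def gammaMap (n : ℕ) :
    FreeAbelianGroup (Fin n → M × G) →+ FreeAbelianGroup ((Fin n → G) × (Fin n → M)) :=
  FreeAbelianGroup.lift fun x =>
    FreeAbelianGroup.of
      (fun j => (x j).2,
       fun j => (x j).1 - if h : (j : ℕ) + 1 < n then (x ⟨(j : ℕ) + 1, h⟩).1 else 0)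

/-- `r_n(g₁,…,g_n; m₁,…,m_n) = ((m₁+⋯+m_n, g₁), (m₂+⋯+m_n, g₂), …, (m_n, g_n))`. -/
def rMap (n : ℕ) :
    FreeAbelianGroup ((Fin n → G) × (Fin n → M)) →+ FreeAbelianGroup (Fin n → M × G) :=
  FreeAbelianGroup.lift fun p =>
    FreeAbelianGroup.of fun j => ((∑ i ∈ Finset.Ici j, p.2 i), p.1 j)

/-- The boundary map `∂^{BR_U}_{d+1}` of `C^{BR_U}_*(X;ℤ)_X` (the version with `X`-set `X`,
whose degree-`d` chain group is free on `(1+d)`-tuples); it is `0` in degrees `≤ 1`. -/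
def dBRUX : (d : ℕ) →
    FreeAbelianGroup ((Fin (d + 2) → G) × (Fin (d + 2) → M)) →+
      FreeAbelianGroup ((Fin (d + 1) → G) × (Fin (d + 1) → M))
  | 0 => 0
  | d + 1 =>
    FreeAbelianGroup.lift fun x =>
      ∑ i : Fin (d + 2),
        (-1 : ℤ) ^ (i : ℕ) •
          (FreeAbelianGroup.of (dGdel (d + 2) i.succ x.1, dMmer (d + 2) i.succ x.2) -
            FreeAbelianGroup.of (dGconj (d + 2) i.succ x.1, dMconj φ (d + 2) i.succ x.1 x.2))

/-- The boundary map `∂^{BR}_{d+1}` of `C^{BR}_*(X;ℤ)_X` (the version with `X`-set `X`);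
it is `0` in degrees `≤ 1`. -/
def dBRX : (d : ℕ) →
    FreeAbelianGroup (Fin (d + 2) → M × G) →+ FreeAbelianGroup (Fin (d + 1) → M × G)
  | 0 => 0
  | d + 1 =>
    FreeAbelianGroup.lift fun x =>
      ∑ i : Fin (d + 2),
        (-1 : ℤ) ^ (i : ℕ) •
          (FreeAbelianGroup.of (fun j => x (i.succ.succAbove j)) -
            FreeAbelianGroup.of (fun j : Fin (d + 2) =>
              if (j : ℕ) < (i : ℕ) + 1 then under φ (x j.castSucc) (x i.succ)
              else GAlex.over φ (x j.succ) (x i.succ)))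


theorem ract_add (m m' : M) (g : G) : ract (m + m') g = ract m g + ract m' g := by
  simp [ract]

theorem ract_ract (m : M) (g h : G) : ract (ract m g) h = ract m (g * h) := by
  simp [ract, mul_smul]

theorem phi_conj (hφ : ∀ g : G, φ g ∈ Subgroup.center G) (g h : G) :
    φ (h⁻¹ * g * h) = φ g := by
  have := Subgroup.mem_center_iff.1 (hφ g) (φ h)⁻¹
  rw [map_mul, map_mul, map_inv, this]; simp

theorem phi_comm (hφ : ∀ g : G, φ g ∈ Subgroup.center G) (g h : G) :
    h * φ g = φ g * h := Subgroup.mem_center_iff.1 (hφ g) h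

theorem phi_phi (hφ : ∀ g : G, φ g ∈ Subgroup.center G) (g h : G) :
    φ h * φ g = φ g * φ h := phi_comm φ hφ g (φ h)

/-- All the faces. -/
def face (e : Bool) (n : ℕ) (p : Fin (n + 1)) (x : (Fin (n + 1) → G) × (Fin (n + 1) → M)) :
    (Fin n → G) × (Fin n → M) :=
  if e then (dGconj n p x.1, dMconj φ n p x.1 x.2) else (dGdel n p x.1, dMmer n p x.2)

theorem dGdel_eq (n : ℕ) (p : Fin (n + 1)) (g : Fin (n + 1) → G) (j : Fin n) :
    dGdel n p g j = if (j : ℕ) < (p : ℕ) then g j.castSucc else g j.succ := by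
  simp only [dGdel, Fin.succAbove, Fin.lt_def, Fin.val_castSucc]
  split_ifs <;> rfl

theorem face_face (hφ : ∀ g : G, φ g ∈ Subgroup.center G) (e e' : Bool) (n : ℕ)
    (i j : Fin (n + 1)) (hij : i ≤ j) (x : (Fin (n + 3) → G) × (Fin (n + 3) → M)) :
    face φ e (n + 1) i.succ (face φ e' (n + 2) j.succ.succ x) =
      face φ e' (n + 1) j.succ (face φ e (n + 2) i.castSucc.succ x) := by
  obtain ⟨g, m⟩ := x
  obtain ⟨i, hi⟩ := i
  obtain ⟨j, hj⟩ := j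
  simp only [Fin.mk_le_mk] at hij
  have h1 : i < j + 1 := by omega
  have h2 : ¬ (j + 1 < i + 1) := by omega
  have h3 : i + 1 < j + 1 + 1 := by omega
  cases e <;> cases e' <;> simp only [face, if_true, if_false, Bool.false_eq_true] <;>
  refine Prod.ext ?_ ?_ <;> funext ⟨k, hk⟩ <;>
  simp only [dGdel_eq, dGconj, dMmer, dMconj, Fin.succ_mk, Fin.castSucc_mk, h3, h2, if_true,
    if_false] <;>
  rcases lt_trichotomy k i with h | h | h <;>
  rcases lt_trichotomy k j with h' | h' | h' <;>
  rcases lt_trichotomy (k+1) j with h'' | h'' | h'' <;>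
  try omega
  all_goals
    try subst h
  all_goals
    try subst h'
  all_goals
    try subst h''
  all_goals
    simp (disch := omega) only [if_pos, if_neg]
  all_goals
    try simp only [phi_conj φ hφ]
  all_goals
    try simp only [if_true, ract_add, ract_ract, add_assoc, mul_inv_rev, mul_assoc,
      mul_inv_cancel_left, inv_inv]
  all_goals
    simp only [phi_comm φ hφ _ (g _), phi_phi φ hφ]

theorem alt_sum {B : Type*} [AddCommGroup B] (n : ℕ) (f : Fin (n + 2) → Fin (n + 1) → B)
    (hf : ∀ i j : Fin (n + 1), i ≤ j → f j.succ i = f i.castSucc j) :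
    ∑ j : Fin (n + 2), ∑ i : Fin (n + 1), ((-1 : ℤ) ^ (j : ℕ) * (-1) ^ (i : ℕ)) • f j i = 0 := by
  rw [← Finset.sum_product', ← Finset.sum_filter_add_sum_filter_not _
    (fun p : Fin (n + 2) × Fin (n + 1) => p.2.castSucc < p.1), add_eq_zero_iff_eq_neg,
    ← Finset.sum_neg_distrib]
  refine Finset.sum_bij (fun p hp => (p.2.castSucc, p.1.pred
    (Fin.ne_zero_of_lt (Finset.mem_filter.1 hp).2))) ?_ ?_ ?_ ?_
  · rintro ⟨a, b⟩ h
    simp [Fin.lt_def] at h ⊢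
    omega
  · rintro ⟨a, b⟩ h ⟨a', b'⟩ h' e
    simpa [and_comm] using e
  · rintro ⟨a, b⟩ h
    simp [Fin.lt_def] at h
    refine ⟨(b.succ, a.castPred ?_), ?_, ?_⟩
    · intro e; subst e; simp at h; omega
    · simp [Fin.lt_def]; omega
    · simp
  · rintro ⟨a, b⟩ h
    simp [Fin.lt_def] at h
    obtain ⟨a, rfl⟩ := Fin.exists_succ_eq.2 (show a ≠ 0 by rintro rfl; simp at h)
    simp only [Fin.val_succ] at h
    have := hf b a (by rw [Fin.le_def]; omega)
    simp only [this, Fin.pred_succ, Fin.val_succ, Fin.val_castSucc, ← neg_smul]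
    congr 1
    ring

theorem dBRUX_of (d : ℕ) (x : (Fin (d + 3) → G) × (Fin (d + 3) → M)) :
    dBRUX φ (d + 1) (FreeAbelianGroup.of x) =
      ∑ i : Fin (d + 2), (-1 : ℤ) ^ (i : ℕ) •
        (FreeAbelianGroup.of (face φ false (d + 2) i.succ x) -
          FreeAbelianGroup.of (face φ true (d + 2) i.succ x)) := by
  simp [dBRUX, face]

/-- `C^{BR_U}_*(X;ℤ)_X` is a chain complex:
`∂^{BR_U}_{n-1} ∘ ∂^{BR_U}_n = 0` for every `n` (the composites in degrees `≤ 0` vanish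
trivially since the chain groups there are zero and the boundary maps are zero). -/
theorem dBRUX_comp_dBRUX_eq_zero (hφ : ∀ g : G, φ g ∈ Subgroup.center G) :
    ∀ d : ℕ, (dBRUX (M := M) φ d).comp (dBRUX (M := M) φ (d + 1)) = 0 := by
  intro d
  cases d with
  | zero => simp [dBRUX]
  | succ d =>
    ext x
    rw [AddMonoidHom.comp_apply, dBRUX_of, map_sum]
    simp only [map_zsmul, map_sub, dBRUX_of, AddMonoidHom.zero_apply, ← Finset.sum_sub_distrib,
      Finset.smul_sum, ← smul_sub, smul_smul]
    refine alt_sum (d + 1) (fun j i => _) ?_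
    intro i j hij
    simp only [face_face φ hφ _ _ _ i j hij]
    abel

end GAlex
end

section
/- Let λ : G → A be a group homomorphism. (1) If f : M² → A is a G-invariant A-multilinear map, then ((f ⊗ id_A) ∘ ψ_{2,λ} ∘ γ₂)((m₁,g₁),(m₂,g₂)) = f(m₁ − m₂, m₂ − m₂·(φ(g₂)g₂⁻¹)) ⊗ λ(g₁) for all m₁,m₂ ∈ M and g₁,g₂ ∈ G. (2) If f : M³ → A is a G-invariant A-multilinear map, then ((f ⊗ id_A) ∘ ψ_{3,λ} ∘ γ₃)((m₁,g₁),(m₂,g₂),(m₃,g₃)) = f((m₁−m₂) − (m₁−m₂)·(φ(g₂)⁻¹g₂), m₂ − m₃, m₃ − m₃·(φ(g₃)g₃⁻¹)) ⊗ λ(g₁) for all m₁,m₂,m₃ ∈ M and g₁,g₂,g₃ ∈ G. (These are the values of the 2- and 3-cocycles Φ_{f,λ} of the G-Alexander multiple conjugation biquandle on the generators all of whose blocks are singletons.) -/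
open FreeAbelianGroup
open scoped TensorProduct

namespace GAlex

variable {G M A : Type*} [Group G] [AddCommGroup M] [DistribMulAction Gᵐᵒᵖ M] [AddCommGroup A]

variable (φ : G →* G)

/-- The subgroup of `G`-coinvariants relations in `C^{gp}_n(M;ℤ)`:
generated by all `(m₁g,…,m_ng) − (m₁,…,m_n)`. -/
def coinvSub (n : ℕ) : AddSubgroup (FreeAbelianGroup (Fin n → M)) :=
  AddSubgroup.closure
    {z | ∃ (m : Fin n → M) (g : G),
        z = FreeAbelianGroup.of (fun i => ract (m i) g) - FreeAbelianGroup.of m}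

/-- The coinvariant group chain group `C^{gp}_n(M;ℤ)_G`. -/
abbrev CgpG (n : ℕ) : Type _ :=
  FreeAbelianGroup (Fin n → M) ⧸ coinvSub (G := G) (M := M) n

/-- The group-homology boundary map `∂^{gp}_{n+1} : C^{gp}_{n+1}(M;ℤ) → C^{gp}_n(M;ℤ)`
(it is `0` in degrees `≤ 1`, which agrees with this formula at `n = 0`). -/
def dgp (n : ℕ) :
    FreeAbelianGroup (Fin (n + 1) → M) →+ FreeAbelianGroup (Fin n → M) :=
  FreeAbelianGroup.lift fun m =>
    (∑ p : Fin (n + 1), (-1 : ℤ) ^ (p : ℕ) • FreeAbelianGroup.of (dMmer n p m)) +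
      (-1 : ℤ) ^ (n + 1) • FreeAbelianGroup.of fun j : Fin n => m j.castSucc

/-- `|k| = k₁ + ⋯ + k_n`. -/
def wt {n : ℕ} (k : Fin n → Bool) : ℕ := ∑ i, if k i then 1 else 0

/-- `g_{k,i} = φ(g₀^{k₀} ⋯ g_i^{k_i}) · g_{i+1}^{k_{i+1}} ⋯ g_{n-1}^{k_{n-1}}`
(indices written `0`-based; the products are ordered). -/
def gki {n : ℕ} (g : Fin n → G) (k : Fin n → Bool) (i : Fin n) : G :=
  φ ((((List.finRange n).filter fun j => decide (j ≤ i)).map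
        fun j => if k j then g j else 1).prod) *
    (((List.finRange n).filter fun j => decide (i < j)).map
        fun j => if k j then g j else 1).prod

/-- The value of `ψ` on a generator:
`Σ_{k, k₀ = 0} (−1)^{|k|} (m₀ g_{k,0}, …, m_n g_{k,n})`, as an element of the free
abelian group (before passing to coinvariants). -/
def psiVal (n : ℕ) (x : (Fin (n + 1) → G) × (Fin (n + 1) → M)) :
    FreeAbelianGroup (Fin (n + 1) → M) :=
  ∑ k ∈ Finset.univ.filter fun k : Fin (n + 1) → Bool => k 0 = false,
    (-1 : ℤ) ^ wt k • FreeAbelianGroup.of fun i => ract (x.2 i) (gki φ x.1 k i)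

/-- `ψ` as a homomorphism into the free abelian group (before coinvariants). -/
def psiFree (n : ℕ) :
    FreeAbelianGroup ((Fin (n + 1) → G) × (Fin (n + 1) → M)) →+
      FreeAbelianGroup (Fin (n + 1) → M) :=
  FreeAbelianGroup.lift (psiVal φ n)

/-- The homomorphism `ψ : C^{BR_U} → C^{gp}(M;ℤ)_G`. -/
def psiG (n : ℕ) :
    FreeAbelianGroup ((Fin (n + 1) → G) × (Fin (n + 1) → M)) →+
      CgpG (G := G) (M := M) (n + 1) :=
  (QuotientAddGroup.mk' (coinvSub (G := G) (M := M) (n + 1))).comp (psiFree φ n)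

/-- The homomorphism `ψ_{•,λ}`, sending a generator `x` to `ψ(x) ⊗ λ(x₁)` where `x₁` is the
first `G`-entry of `x`. -/
noncomputable def psiLam (lam : G → A) (n : ℕ) :
    FreeAbelianGroup ((Fin (n + 1) → G) × (Fin (n + 1) → M)) →+
      TensorProduct ℤ (CgpG (G := G) (M := M) (n + 1)) A :=
  FreeAbelianGroup.lift fun x =>
    (QuotientAddGroup.mk' (coinvSub (G := G) (M := M) (n + 1)) (psiVal φ n x)) ⊗ₜ[ℤ]
      lam (x.1 0)

/-- `D^{gp}_n(M;ℤ)_G`: the image in the coinvariants of the subgroup generated by tuples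
with a vanishing entry in a position `1 ≤ i ≤ n−1`. -/
def DgpGsub (n : ℕ) : AddSubgroup (CgpG (G := G) (M := M) n) :=
  (AddSubgroup.closure
      {z : FreeAbelianGroup (Fin n → M) |
        ∃ (m : Fin n → M) (i : Fin n),
          (i : ℕ) + 1 < n ∧ m i = 0 ∧ z = FreeAbelianGroup.of m}).map
    (QuotientAddGroup.mk' (coinvSub (G := G) (M := M) n))

theorem ract_one' (m : M) : ract m (1 : G) = m := by
  simp [ract]

theorem psiVal_two (a b : M) (g₁ g₂ : G) (g : Fin 2 → G) (m : Fin 2 → M)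
    (F : (Fin 2 → M) → A) (h1 : g 1 = g₂) (hm0 : m 0 = a) (hm1 : m 1 = b) :
    FreeAbelianGroup.lift F (psiVal φ 1 (g, m)) =
      F ![a, b] - F ![ract a g₂, ract b (φ g₂)] := by
  have hs : (Finset.univ.filter fun k : Fin 2 → Bool => k 0 = false) =
      {![false, false], ![false, true]} := by decide
  have e : ∀ v : Fin 2 → M, v = ![v 0, v 1] := by
    intro v; ext i; fin_cases i <;> rfl
  unfold psiVal
  rw [hs, Finset.sum_pair (by decide)]
  simp only [map_add, map_zsmul, FreeAbelianGroup.lift_apply_of]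
  rw [e (fun i => ract (m i) (gki φ g ![false, false] i)),
    e (fun i => ract (m i) (gki φ g ![false, true] i))]
  have w0 : wt ![false, false] = 0 := by decide
  have w1 : wt ![false, true] = 1 := by decide
  simp [w0, w1, gki, List.finRange_succ, h1, hm0, hm1, ract_one',
    sub_eq_add_neg]

theorem psiVal_three (a b c : M) (g₂ g₃ : G) (g : Fin 3 → G) (m : Fin 3 → M)
    (F : (Fin 3 → M) → A) (h1 : g 1 = g₂) (h2 : g 2 = g₃)
    (hm0 : m 0 = a) (hm1 : m 1 = b) (hm2 : m 2 = c) :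
    FreeAbelianGroup.lift F (psiVal φ 2 (g, m)) =
      F ![a, b, c] - F ![ract a g₂, ract b (φ g₂), ract c (φ g₂)]
       - F ![ract a g₃, ract b g₃, ract c (φ g₃)]
       + F ![ract a (g₂ * g₃), ract b (φ g₂ * g₃), ract c (φ g₂ * φ g₃)] := by
  have hs : (Finset.univ.filter fun k : Fin 3 → Bool => k 0 = false) =
      {![false, false, false], ![false, true, false], ![false, false, true],
        ![false, true, true]} := by decide
  have e : ∀ v : Fin 3 → M, v = ![v 0, v 1, v 2] := by
    intro v; ext i; fin_cases i <;> rfl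
  unfold psiVal
  rw [hs, Finset.sum_insert (by decide), Finset.sum_insert (by decide),
    Finset.sum_pair (by decide)]
  simp only [map_add, map_zsmul, FreeAbelianGroup.lift_apply_of]
  rw [e (fun i => ract (m i) (gki φ g ![false, false, false] i)),
    e (fun i => ract (m i) (gki φ g ![false, true, false] i)),
    e (fun i => ract (m i) (gki φ g ![false, false, true] i)),
    e (fun i => ract (m i) (gki φ g ![false, true, true] i))]
  have w0 : wt ![false, false, false] = 0 := by decide
  have w1 : wt ![false, true, false] = 1 := by decide
  have w2 : wt ![false, false, true] = 1 := by decide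
  have w3 : wt ![false, true, true] = 2 := by decide
  simp [w0, w1, w2, w3, gki, List.finRange_succ, h1, h2, hm0, hm1, hm2,
    ract_one', sub_eq_add_neg, add_assoc]

/-- Values of the `2`- and `3`-cocycles `Φ_{f,λ}` of the `G`-Alexander
multiple conjugation biquandle on the generators all of whose blocks are singletons:
`((f ⊗ id_A) ∘ ψ_{2,λ} ∘ γ₂)((m₁,g₁),(m₂,g₂)) =
   f(m₁ − m₂, m₂ − m₂·(φ(g₂)g₂⁻¹)) ⊗ λ(g₁)` and
`((f ⊗ id_A) ∘ ψ_{3,λ} ∘ γ₃)((m₁,g₁),(m₂,g₂),(m₃,g₃)) =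
   f((m₁−m₂) − (m₁−m₂)·(φ(g₂)⁻¹g₂), m₂ − m₃, m₃ − m₃·(φ(g₃)g₃⁻¹)) ⊗ λ(g₁)`.
(The induced homomorphism `f ⊗ id_A` is expressed through representatives, so the
composite is computed by the free lift of `f` applied to `ψ^{free}`.) -/
theorem mcb_cocycle_formulas (hφ : ∀ g : G, φ g ∈ Subgroup.center G)
    (lam : G → A) (hlam : ∀ g h : G, lam (g * h) = lam g + lam h) :
    (∀ f : M → M → A,
      (∀ m m' n : M, f (m + m') n = f m n + f m' n) →
      (∀ m n n' : M, f m (n + n') = f m n + f m n') →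
      (∀ (m n : M) (g : G), f (ract m g) (ract n g) = f m n) →
      ∀ (m₁ m₂ : M) (g₁ g₂ : G),
        (FreeAbelianGroup.lift fun x : (Fin 2 → G) × (Fin 2 → M) =>
            (FreeAbelianGroup.lift (fun v : Fin 2 → M => f (v 0) (v 1)) (psiVal φ 1 x))
              ⊗ₜ[ℤ] lam (x.1 0))
          (gammaMap 2 (FreeAbelianGroup.of ![(m₁, g₁), (m₂, g₂)])) =
        f (m₁ - m₂) (m₂ - ract m₂ (φ g₂ * g₂⁻¹)) ⊗ₜ[ℤ] lam g₁) ∧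
    (∀ f : M → M → M → A,
      (∀ m m' n p : M, f (m + m') n p = f m n p + f m' n p) →
      (∀ m n n' p : M, f m (n + n') p = f m n p + f m n' p) →
      (∀ m n p p' : M, f m n (p + p') = f m n p + f m n p') →
      (∀ (m n p : M) (g : G), f (ract m g) (ract n g) (ract p g) = f m n p) →
      ∀ (m₁ m₂ m₃ : M) (g₁ g₂ g₃ : G),
        (FreeAbelianGroup.lift fun x : (Fin 3 → G) × (Fin 3 → M) =>
            (FreeAbelianGroup.lift (fun v : Fin 3 → M => f (v 0) (v 1) (v 2))
              (psiVal φ 2 x)) ⊗ₜ[ℤ] lam (x.1 0))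
          (gammaMap 3 (FreeAbelianGroup.of ![(m₁, g₁), (m₂, g₂), (m₃, g₃)])) =
        f ((m₁ - m₂) - ract (m₁ - m₂) ((φ g₂)⁻¹ * g₂)) (m₂ - m₃)
            (m₃ - ract m₃ (φ g₃ * g₃⁻¹)) ⊗ₜ[ℤ] lam g₁) := by
  refine ⟨?_, ?_⟩
  · intro f hl hr hG m₁ m₂ g₁ g₂
    have sr : ∀ m n n' : M, f m (n - n') = f m n - f m n' := fun m n n' => by
      rw [eq_sub_iff_add_eq, ← hr, sub_add_cancel]
    unfold gammaMap
    rw [FreeAbelianGroup.lift_apply_of, FreeAbelianGroup.lift_apply_of,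
      psiVal_two φ (m₁ - m₂) m₂ g₁ g₂ _ _ _ (by simp) (by simp) (by simp)]
    have := hG (m₁ - m₂) (ract m₂ (φ g₂ * g₂⁻¹)) g₂
    rw [ract_ract, inv_mul_cancel_right] at this
    simp [sr, this]
  · intro f ha hb hc hG m₁ m₂ m₃ g₁ g₂ g₃
    have sa : ∀ m n p p' : M, f (p - p') m n = f p m n - f p' m n := fun m n p p' => by
      rw [eq_sub_iff_add_eq, ← ha, sub_add_cancel]
    have sc : ∀ m n p p' : M, f m n (p - p') = f m n p - f m n p' := fun m n p p' => by
      rw [eq_sub_iff_add_eq, ← hc, sub_add_cancel]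
    have cm : ∀ g h : G, h * φ g = φ g * h := fun g h =>
      Subgroup.mem_center_iff.mp (hφ g) h
    unfold gammaMap
    rw [FreeAbelianGroup.lift_apply_of, FreeAbelianGroup.lift_apply_of,
      psiVal_three φ (m₁ - m₂) (m₂ - m₃) m₃ g₂ g₃ _ _ _ (by simp) (by simp) (by simp)
        (by simp) (by simp)]
    generalize m₁ - m₂ = a
    generalize m₂ - m₃ = b
    have e1 := hG (ract a ((φ g₂)⁻¹ * g₂)) b m₃ (φ g₂)
    have e2 := hG a b (ract m₃ (φ g₃ * g₃⁻¹)) g₃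
    have e3 := hG (ract a ((φ g₂)⁻¹ * g₂)) b (ract m₃ (φ g₃ * g₃⁻¹)) (φ g₂ * g₃)
    have q1 : (φ g₂)⁻¹ * g₂ * φ g₂ = g₂ := by rw [mul_assoc, cm, inv_mul_cancel_left]
    have q2 : φ g₃ * g₃⁻¹ * (φ g₂ * g₃) = φ g₂ * φ g₃ := by
      rw [← mul_assoc, cm, ← mul_assoc, inv_mul_cancel_right]
    have q3 : (φ g₂)⁻¹ * g₂ * (φ g₂ * g₃) = g₂ * g₃ := by rw [← mul_assoc, q1]
    rw [ract_ract, q1] at e1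
    rw [ract_ract, inv_mul_cancel_right] at e2
    rw [ract_ract, ract_ract, q2, q3] at e3
    simp only [sa, sc, ← e1, ← e2, ← e3]
    congr 1
    simp
    abel

end GAlex
end
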